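/- arXiv:2111.01966 — 2 statements merged into one kernel-verified Lean document; each statement's English description precedes it below -/
import Mathlib

section
/- Let V be a finite-dimensional real vector space with a symmetric bilinear form ⟨·,·⟩, a, b, d ∈ {−1,1}, n ≥ 2 an integer, H ∈ ℝ. Let g : ℝ → ℝ be positive and twice differentiable with g′(t)² + d·g(t)²·(a + b·κ₁(t)²) = 0 and g″(t) = −d·g(t)·(a + b·κ₁(t)·κ₂(t)) for all t, where κ₁ = H + g^(−n), κ₂ = H − (n−1)·g^(−n) (i.e. the associated constant C equals 0). Let α : ℝ → V be twice differentiable and β : ℝ → V differentiable with α″ = b·d·κ₂·β − a·d·α and β′ = −κ₂·α′, satisfying ⟨α(0),α(0)⟩ = a, ⟨β(0),β(0)⟩ = b, ⟨α′(0),α′(0)⟩ = d and ⟨α(0),β(0)⟩ = ⟨α(0),α′(0)⟩ = ⟨β(0),α′(0)⟩ = 0. Set ρ₀ := −g′(0)·α′(0) + b·d·g(0)·κ₁(0)·β(0) − d·a·g(0)·α(0), and let y ∈ V satisfy ⟨y, α(t)⟩ = ⟨y, β(t)⟩ = ⟨y, α′(t)⟩ = 0 for all t. Then φ(y,t) :=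 y + α(t) + (d·⟨y,y⟩/(2·g(t)))·ρ₀ satisfies ⟨φ(y,t), φ(y,t)⟩ = a for every t ∈ ℝ. -/
/-!
The position `α`, the normal `β` and the tangent `τ = α'` of the profile curve form a moving frame
whose connection matrix is skew for `diag(a, b, d)`. Hence the tensor
`a α ⊗ α + b β ⊗ β + d τ ⊗ τ` is constant in `t`, and linear algebra alone then shows that the
frame stays pseudo-orthonormal: the tensor at `t = 0` is the inverse of the form on the span of the
frame, so the frame at time `t` spans the same space and its Gram matrix there is `diag(a, b, d)`.

The relation `(g κ₁)' = g' κ₂` makes `ρ = -g' τ + b d g κ₁ β - d a g α` constant, so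
`⟨ρ, ρ⟩ = 0` and `⟨α, ρ⟩ = -d g` can be read off at time `t`. In the expansion of `⟨φ, φ⟩` the cross
term `d ⟨y, y⟩ / g · ⟨α, ρ⟩ = -⟨y, y⟩` then cancels `⟨y, y⟩` and leaves `⟨α, α⟩ = a`.
-/

section LinearAlgebra

open Module Submodule

variable {K V ι : Type*} [Field K] [AddCommGroup V] [Module K V]

/-- The Gram matrix of the family `e` with respect to `B` is `Matrix.diagonal ε`. For `ε i = ±1`
this says that `e` is pseudo-orthonormal with signature `ε`. -/
def HasDiagonalGram [DecidableEq ι] (B : V →ₗ[K] V →ₗ[K] K) (ε : ι → K) (e : ι → V) : Prop :=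
  ∀ i j, B (e i) (e j) = Matrix.diagonal ε i j

theorem HasDiagonalGram.linearIndependent [DecidableEq ι] {B : V →ₗ[K] V →ₗ[K] K} {ε : ι → K}
    {e : ι → V} (he : HasDiagonalGram B ε e) (hε : ∀ i, ε i ≠ 0) : LinearIndependent K e :=
  LinearMap.linearIndependent_of_isOrthoᵢ
    (LinearMap.isOrthoᵢ_def.2 fun i j hij ↦ by rw [he i j, Matrix.diagonal_apply_ne _ hij])
    fun i ↦ by rw [he i i, Matrix.diagonal_apply_eq]; exact hε i

theorem linearIndependent_and_span_eq_of_span_le [Finite ι] {e f : ι → V}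
    (he : LinearIndependent K e) (hle : span K (Set.range e) ≤ span K (Set.range f)) :
    LinearIndependent K f ∧ span K (Set.range e) = span K (Set.range f) := by
  cases nonempty_fintype ι
  have hcard : finrank K (span K (Set.range e)) = Fintype.card ι := finrank_span_eq_card he
  have : FiniteDimensional K (span K (Set.range f)) :=
    .span_of_finite K (Set.finite_range f)
  refine ⟨linearIndependent_iff_card_le_finrank_span.2 ?_, eq_of_le_of_finrank_le hle ?_⟩
  · exact hcard ▸ finrank_mono hle
  · exact hcard ▸ finrank_range_le_card f

variable [Fintype ι]

/-- The operator `v ↦ ∑ i, w i • ⟨f i, v⟩ • f i`, i.e. the tensor `∑ i, w i • f i ⊗ f i` with one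
factor contracted by `B`. For an orthogonal family with weights `w i = ⟨f i, f i⟩⁻¹` it is the
identity on the span of `f`. -/
def frameOperator (B : V →ₗ[K] V →ₗ[K] K) (w : ι → K) (f : ι → V) : V →ₗ[K] V :=
  ∑ i, w i • (B (f i)).smulRight (f i)

theorem frameOperator_apply (B : V →ₗ[K] V →ₗ[K] K) (w : ι → K) (f : ι → V) (v : V) :
    frameOperator B w f v = ∑ i, (w i * B (f i) v) • f i := by
  simp [frameOperator, mul_smul]

theorem frameOperator_apply_mem_span (B : V →ₗ[K] V →ₗ[K] K) (w : ι → K) (f : ι → V) (v : V) :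
    frameOperator B w f v ∈ span K (Set.range f) := by
  rw [frameOperator_apply]
  exact sum_mem fun i _ ↦ smul_mem _ _ (subset_span (Set.mem_range_self i))

namespace HasDiagonalGram

variable [DecidableEq ι] {B : V →ₗ[K] V →ₗ[K] K} {ε : ι → K} {e f : ι → V}

theorem frameOperator_apply_of_mem_span (he : HasDiagonalGram B ε e) (hε : ∀ i, ε i ≠ 0)
    {v : V} (hv : v ∈ span K (Set.range e)) : frameOperator B ε⁻¹ e v = v := by
  refine LinearMap.eqOn_span (g := LinearMap.id) ?_ hv
  rintro _ ⟨j, rfl⟩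
  simp [frameOperator_apply, he _ j, Matrix.diagonal_apply, hε]

theorem of_frameOperator_eq (he : HasDiagonalGram B ε e) (hε : ∀ i, ε i ≠ 0)
    (hfe : frameOperator B ε⁻¹ f = frameOperator B ε⁻¹ e) : HasDiagonalGram B ε f := by
  have hle : span K (Set.range e) ≤ span K (Set.range f) := fun v hv ↦ by
    rw [← he.frameOperator_apply_of_mem_span hε hv, ← hfe]
    exact frameOperator_apply_mem_span B ε⁻¹ f v
  obtain ⟨hf, hspan⟩ := linearIndependent_and_span_eq_of_span_le (he.linearIndependent hε) hle
  intro i j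
  have hj : f j ∈ span K (Set.range e) := hspan ▸ subset_span (Set.mem_range_self j)
  have hexpand : ∑ k, (ε⁻¹ k * B (f k) (f j)) • f k = ∑ k, (Pi.single j 1 : ι → K) k • f k := by
    rw [← frameOperator_apply, hfe, he.frameOperator_apply_of_mem_span hε hj]
    simp [Pi.single_apply]
  have hcoord := hf.eq_coords_of_eq hexpand i
  rw [Pi.inv_apply, inv_mul_eq_iff_eq_mul₀ (hε i)] at hcoord
  simpa [Matrix.diagonal_apply, Pi.single_apply] using hcoord

end HasDiagonalGram

theorem hasDiagonalGram_vec3_iff {B : V →ₗ[K] V →ₗ[K] K} (hB : ∀ x y, B x y = B y x)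
    {a b d : K} {x ν τ : V} :
    HasDiagonalGram B ![a, b, d] ![x, ν, τ] ↔
      (B x x = a ∧ B ν ν = b ∧ B τ τ = d) ∧ B x ν = 0 ∧ B x τ = 0 ∧ B ν τ = 0 := by
  simp only [HasDiagonalGram, Fin.forall_fin_succ, Matrix.diagonal_apply]
  simp only [hB ν x, hB τ x, hB τ ν, Fin.isValue, Fin.succ_zero_eq_one, Fin.succ_one_eq_two,
    Fin.reduceEq, Matrix.cons_val_zero, Matrix.cons_val_one, Matrix.cons_val, zero_ne_one,
    one_ne_zero, ↓reduceIte, IsEmpty.forall_iff, and_true]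
  tauto

theorem bilin_self_add_add_smul {R M : Type*} [CommRing R] [AddCommGroup M] [Module R M]
    {B : M →ₗ[R] M →ₗ[R] R} (hB : ∀ x y, B x y = B y x) {x y ρ : M} (hyx : B y x = 0)
    (hyρ : B y ρ = 0) (hρ : B ρ ρ = 0) (c : R) :
    B (y + x + c • ρ) (y + x + c • ρ) = B y y + B x x + 2 * c * B x ρ := by
  simp only [map_add, map_smul, LinearMap.add_apply, LinearMap.smul_apply, smul_eq_mul, hB x y,
    hB ρ y, hB ρ x, hyx, hyρ, hρ]
  ring

/-- The paper's vector `η = -g' τ + b d g κ₁ β - d a g α`, constant along the profile, in terms of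
the frame `(x, ν, τ) = (α, β, α')` and of the values `g`, `g'` and `k` of the warping function, its
derivative and `κ₁` at one time. -/
def axisVector (a b d g g' k : K) (x ν τ : V) : V :=
  (-g') • τ + (b * d * g * k) • ν - (d * a * g) • x

theorem bilin_self_add_add_smul_axisVector [NeZero (2 : K)] {B : V →ₗ[K] V →ₗ[K] K}
    (hB : ∀ x y, B x y = B y x) {a b d g g' k : K} {x ν τ y : V}
    (hframe : HasDiagonalGram B ![a, b, d] ![x, ν, τ])
    (ha : a * a = 1) (hb : b * b = 1) (hd : d * d = 1)
    (hyx : B y x = 0) (hyν : B y ν = 0) (hyτ : B y τ = 0)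
    (hg : g ≠ 0) (hfirst : g' ^ 2 + d * g ^ 2 * (a + b * k ^ 2) = 0) :
    let ρ := axisVector a b d g g' k x ν τ
    B (y + x + (d * B y y / (2 * g)) • ρ) (y + x + (d * B y y / (2 * g)) • ρ) = a := by
  intro ρ
  obtain ⟨⟨hxx, hνν, hττ⟩, hxν, hxτ, hντ⟩ := (hasDiagonalGram_vec3_iff hB).1 hframe
  have hρρ : B ρ ρ = 0 := by
    simp only [ρ, axisVector, map_add, map_sub, map_smul, LinearMap.add_apply,
      LinearMap.sub_apply, LinearMap.smul_apply, smul_eq_mul, hB ν x, hB τ x, hB τ ν, hxx, hνν,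
      hττ, hxν, hxτ, hντ]
    linear_combination d * hfirst + d ^ 2 * b * g ^ 2 * k ^ 2 * hb + d ^ 2 * a * g ^ 2 * ha
  have hyρ : B y ρ = 0 := by simp [ρ, axisVector, hyx, hyν, hyτ]
  have hxρ : B x ρ = -(d * g) := by
    simp only [ρ, axisVector, map_add, map_sub, map_smul, smul_eq_mul, hxx, hxν, hxτ]
    linear_combination -(d * g) * ha
  rw [bilin_self_add_add_smul hB hyx hyρ hρρ, hxρ, hxx]
  field_simp
  linear_combination -B y y * hd

end LinearAlgebra

section MovingFrame

open Submodule

variable {𝕜 V ι : Type*} [RCLike 𝕜] [NormedAddCommGroup V] [NormedSpace 𝕜 V] [Fintype ι]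
  {F : 𝕜 → ι → V} {A : 𝕜 → Matrix ι ι 𝕜} {w : ι → 𝕜}

theorem sum_strongDual_smul_eq_of_skew
    (hF : ∀ t i, HasDerivAt (fun s ↦ F s i) (∑ j, A t i j • F t j) t)
    (hA : ∀ t i j, w i * A t i j = -(w j * A t j i)) (ℓ : StrongDual 𝕜 V) (s t : 𝕜) :
    ∑ i, (w i * ℓ (F s i)) • F s i = ∑ i, (w i * ℓ (F t i)) • F t i := by
  have hderiv (t : 𝕜) : HasDerivAt (fun s ↦ ∑ i, (w i * ℓ (F s i)) • F s i) 0 t := by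
    have hℓ (i : ι) : HasDerivAt (fun s ↦ ℓ (F s i)) (∑ j, A t i j * ℓ (F t j)) t :=
      (ℓ.hasFDerivAt.comp_hasDerivAt t (hF t i)).congr_deriv (by simp)
    refine (HasDerivAt.fun_sum fun i _ ↦
      ((hℓ i).const_mul (w i)).fun_smul (hF t i)).congr_deriv ?_
    have hskew (i j : ι) : w j * ℓ (F t j) * A t j i + w i * (A t i j * ℓ (F t j)) = 0 := by
      linear_combination ℓ (F t j) * hA t i j
    simp only [Finset.smul_sum, smul_smul, Finset.mul_sum, Finset.sum_smul, Finset.sum_add_distrib]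
    rw [Finset.sum_comm]
    simp only [← Finset.sum_add_distrib, ← add_smul, hskew, zero_smul, Finset.sum_const_zero]
  exact is_const_of_deriv_eq_zero (fun t ↦ (hderiv t).differentiableAt)
    (fun t ↦ (hderiv t).deriv) s t

-- `B` may be discontinuous, but on the finite-dimensional span of the two frames `B · v` agrees
-- with a continuous functional.
theorem frameOperator_eq_of_skew (B : V →ₗ[𝕜] V →ₗ[𝕜] 𝕜)
    (hF : ∀ t i, HasDerivAt (fun s ↦ F s i) (∑ j, A t i j • F t j) t)
    (hA : ∀ t i j, w i * A t i j = -(w j * A t j i)) (s t : 𝕜) :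
    frameOperator B w (F s) = frameOperator B w (F t) := by
  ext v
  let U : Submodule 𝕜 V := span 𝕜 (Set.range (F s) ∪ Set.range (F t))
  have : FiniteDimensional 𝕜 U :=
    FiniteDimensional.span_of_finite 𝕜 ((Set.finite_range _).union (Set.finite_range _))
  obtain ⟨ℓ, hℓ⟩ := (SeparatingDual.dualMap_surjective_iff (f := U.subtype)).2
    U.injective_subtype (B.flip v ∘ₗ U.subtype)
  have hℓB (u : V) (hu : u ∈ U) : ℓ u = B u v := LinearMap.congr_fun hℓ ⟨u, hu⟩
  have hs (i : ι) : ℓ (F s i) = B (F s i) v :=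
    hℓB _ (subset_span (.inl (Set.mem_range_self i)))
  have ht (i : ι) : ℓ (F t i) = B (F t i) v :=
    hℓB _ (subset_span (.inr (Set.mem_range_self i)))
  simpa only [frameOperator_apply, hs, ht] using sum_strongDual_smul_eq_of_skew hF hA ℓ s t

theorem HasDiagonalGram.of_hasDerivAt_skew [DecidableEq ι] {B : V →ₗ[𝕜] V →ₗ[𝕜] 𝕜} {ε : ι → 𝕜}
    (hε : ∀ i, ε i ≠ 0)
    (hF : ∀ t i, HasDerivAt (fun s ↦ F s i) (∑ j, A t i j • F t j) t)
    (hA : ∀ t i j, ε j * A t i j = -(ε i * A t j i))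
    {t₀ : 𝕜} (h₀ : HasDiagonalGram B ε (F t₀)) (t : 𝕜) : HasDiagonalGram B ε (F t) := by
  refine h₀.of_frameOperator_eq hε (frameOperator_eq_of_skew B hF (fun t i j ↦ ?_) t t₀)
  rw [Pi.inv_apply, Pi.inv_apply, inv_mul_eq_iff_eq_mul₀ (hε i)]
  field_simp [hε i, hε j]
  linear_combination hA t i j

end MovingFrame

section Profile

variable {V : Type*} [NormedAddCommGroup V] [NormedSpace ℝ V] {a b d : ℝ} {κ : ℝ → ℝ}
  {α β τ : ℝ → V}

/-- The first-order form `α' = τ`, `β' = -κ τ`, `τ' = b d κ β - a d α` of the ODE system for the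
profile data of a CMC immersion, where `τ` is the tangent of the profile curve `α` and `β` its
normal. -/
structure IsProfileSystem (a b d : ℝ) (κ : ℝ → ℝ) (α β τ : ℝ → V) : Prop where
  hasDerivAt_position (t : ℝ) : HasDerivAt α (τ t) t
  hasDerivAt_normal (t : ℝ) : HasDerivAt β (-κ t • τ t) t
  hasDerivAt_tangent (t : ℝ) : HasDerivAt τ ((b * d * κ t) • β t - (a * d) • α t) t

theorem IsProfileSystem.hasDiagonalGram (h : IsProfileSystem a b d κ α β τ)
    (ha : a * a = 1) (hb : b * b = 1) (hd : d ≠ 0) {B : V →ₗ[ℝ] V →ₗ[ℝ] ℝ} {t₀ : ℝ}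
    (h₀ : HasDiagonalGram B ![a, b, d] ![α t₀, β t₀, τ t₀]) (t : ℝ) :
    HasDiagonalGram B ![a, b, d] ![α t, β t, τ t] := by
  let A (t : ℝ) : Matrix (Fin 3) (Fin 3) ℝ := !![0, 0, 1; 0, 0, -κ t; -(a * d), b * d * κ t, 0]
  refine HasDiagonalGram.of_hasDerivAt_skew (F := fun t ↦ ![α t, β t, τ t]) (A := A)
    (fun i ↦ ?_) (fun t i ↦ ?_) (fun t i j ↦ ?_) h₀ t
  · fin_cases i
    exacts [left_ne_zero_of_mul_eq_one ha, left_ne_zero_of_mul_eq_one hb, hd]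
  · fin_cases i
    · simpa [A, Fin.sum_univ_three] using h.hasDerivAt_position t
    · simpa [A, Fin.sum_univ_three] using h.hasDerivAt_normal t
    · simpa [A, Fin.sum_univ_three, sub_eq_neg_add] using h.hasDerivAt_tangent t
  · fin_cases i <;> fin_cases j <;> simp [A] <;> grind

theorem IsProfileSystem.axisVector_eq (h : IsProfileSystem a b d κ α β τ) {g g' κ₁ : ℝ → ℝ}
    (hg : ∀ t, HasDerivAt g (g' t) t)
    (hg' : ∀ t, HasDerivAt g' (-d * g t * (a + b * κ₁ t * κ t)) t)
    (hgκ : ∀ t, HasDerivAt (fun s ↦ g s * κ₁ s) (g' t * κ t) t) (s t : ℝ) :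
    axisVector a b d (g s) (g' s) (κ₁ s) (α s) (β s) (τ s) =
      axisVector a b d (g t) (g' t) (κ₁ t) (α t) (β t) (τ t) := by
  have hderiv (t : ℝ) : HasDerivAt
      (fun s ↦ axisVector a b d (g s) (g' s) (κ₁ s) (α s) (β s) (τ s)) 0 t := by
    simp only [axisVector, mul_assoc (b * d)]
    refine ((((hg' t).fun_neg.fun_smul (h.hasDerivAt_tangent t)).fun_add
      (((hgκ t).const_mul (b * d)).fun_smul (h.hasDerivAt_normal t))).fun_sub
      (((hg t).const_mul (d * a)).fun_smul (h.hasDerivAt_position t))).congr_deriv ?_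
    module
  exact is_const_of_deriv_eq_zero (fun t ↦ (hderiv t).differentiableAt)
    (fun t ↦ (hderiv t).deriv) s t

end Profile

theorem hasDerivAt_mul_of_eq_add_zpow_neg {𝕜 : Type*} [NontriviallyNormedField 𝕜]
    {g κ : 𝕜 → 𝕜} {g' t H : 𝕜} {n : ℤ} (hg : HasDerivAt g g' t) (hgt : g t ≠ 0)
    (hκ : ∀ s, κ s = H + g s ^ (-n)) :
    HasDerivAt (fun s ↦ g s * κ s) (g' * (H - (n - 1) * g t ^ (-n))) t := by
  have hpow : HasDerivAt (fun s ↦ g s ^ (-n)) (((-n : ℤ) : 𝕜) * g t ^ (-n - 1) * g') t :=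
    (hasDerivAt_zpow (-n) (g t) (.inl hgt)).comp t hg
  simp only [hκ]
  refine (hg.fun_mul (hpow.const_add H)).congr_deriv ?_
  rw [zpow_sub_one₀ hgt]
  push_cast
  field_simp
  ring

theorem stmt_8_general {V : Type*} [NormedAddCommGroup V] [NormedSpace ℝ V]
    {B : V →ₗ[ℝ] V →ₗ[ℝ] ℝ} (hBsymm : ∀ x y : V, B x y = B y x) {a b d : ℝ}
    (ha : a = -1 ∨ a = 1) (hb : b = -1 ∨ b = 1) (hd : d = -1 ∨ d = 1)
    {g κ₁ κ₂ : ℝ → ℝ} (hg₀ : ∀ t, g t ≠ 0)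
    (hg : Differentiable ℝ g) (hg' : Differentiable ℝ (deriv g))
    (hgκ : ∀ t, HasDerivAt (fun s ↦ g s * κ₁ s) (deriv g t * κ₂ t) t)
    (hfirstint : ∀ t, deriv g t ^ 2 + d * g t ^ 2 * (a + b * κ₁ t ^ 2) = 0)
    (hg'' : ∀ t, deriv (deriv g) t = -d * g t * (a + b * κ₁ t * κ₂ t))
    {α β : ℝ → V}
    (hα : Differentiable ℝ α) (hα' : Differentiable ℝ (deriv α)) (hβ : Differentiable ℝ β)
    (hαeq : ∀ t, deriv (deriv α) t = (b * d * κ₂ t) • β t - (a * d) • α t)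
    (hβeq : ∀ t, deriv β t = (-(κ₂ t)) • deriv α t)
    (hframe : HasDiagonalGram B ![a, b, d] ![α 0, β 0, deriv α 0])
    {ρ₀ : V} (hρ₀ : ρ₀ = axisVector a b d (g 0) (deriv g 0) (κ₁ 0) (α 0) (β 0) (deriv α 0))
    {y : V} (hyα : ∀ t, B y (α t) = 0) (hyβ : ∀ t, B y (β t) = 0)
    (hyα' : ∀ t, B y (deriv α t) = 0) (t : ℝ) :
    B (y + α t + (d * B y y / (2 * g t)) • ρ₀) (y + α t + (d * B y y / (2 * g t)) • ρ₀) = a := by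
  have haa : a * a = 1 := mul_self_eq_one_iff.2 ha.symm
  have hbb : b * b = 1 := mul_self_eq_one_iff.2 hb.symm
  have hdd : d * d = 1 := mul_self_eq_one_iff.2 hd.symm
  have hsys : IsProfileSystem a b d κ₂ α β (deriv α) :=
    ⟨fun t ↦ (hα t).hasDerivAt, fun t ↦ hβeq t ▸ (hβ t).hasDerivAt,
      fun t ↦ hαeq t ▸ (hα' t).hasDerivAt⟩
  rw [hρ₀, hsys.axisVector_eq (fun t ↦ (hg t).hasDerivAt)
    (fun t ↦ hg'' t ▸ (hg' t).hasDerivAt) hgκ 0 t]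
  exact bilin_self_add_add_smul_axisVector hBsymm
    (hsys.hasDiagonalGram haa hbb (left_ne_zero_of_mul_eq_one hdd) hframe t) haa hbb hdd (hyα t)
    (hyβ t) (hyα' t) (hg₀ t) (hfirstint t)

/-- Theorem 7.2 (C = 0 immersion lies in the quadric): the map
`φ(y,t) = y + α(t) + (d·⟨y,y⟩/(2·g(t)))·ρ₀` satisfies `⟨φ(y,t),φ(y,t)⟩ = a`. -/
theorem stmt_8 (V : Type*) [NormedAddCommGroup V] [NormedSpace ℝ V]
    [FiniteDimensional ℝ V]
    (B : V →ₗ[ℝ] V →ₗ[ℝ] ℝ) (hBsymm : ∀ x y : V, B x y = B y x)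
    (n : ℕ) (hn : 2 ≤ n) (H a b d : ℝ)
    (ha : a = -1 ∨ a = 1) (hb : b = -1 ∨ b = 1) (hd : d = -1 ∨ d = 1)
    (g : ℝ → ℝ) (hgpos : ∀ t, 0 < g t)
    (hg : Differentiable ℝ g) (hg' : Differentiable ℝ (deriv g))
    (κ₁ κ₂ : ℝ → ℝ)
    (hκ₁ : ∀ t, κ₁ t = H + g t ^ (-(n : ℤ)))
    (hκ₂ : ∀ t, κ₂ t = H - ((n : ℝ) - 1) * g t ^ (-(n : ℤ)))
    (hfirstint : ∀ t : ℝ,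
      (deriv g t) ^ 2 + d * (g t) ^ 2 * (a + b * (κ₁ t) ^ 2) = 0)
    (hg'' : ∀ t : ℝ, deriv (deriv g) t = -d * g t * (a + b * κ₁ t * κ₂ t))
    (α β : ℝ → V)
    (hα : Differentiable ℝ α) (hα' : Differentiable ℝ (deriv α))
    (hβ : Differentiable ℝ β)
    (hαeq : ∀ t : ℝ, deriv (deriv α) t = (b * d * κ₂ t) • β t - (a * d) • α t)
    (hβeq : ∀ t : ℝ, deriv β t = (-(κ₂ t)) • deriv α t)
    (hαα : B (α 0) (α 0) = a) (hββ : B (β 0) (β 0) = b)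
    (hα'α' : B (deriv α 0) (deriv α 0) = d)
    (hαβ : B (α 0) (β 0) = 0) (hαα' : B (α 0) (deriv α 0) = 0)
    (hβα' : B (β 0) (deriv α 0) = 0)
    (ρ₀ : V)
    (hρ₀ : ρ₀ = (-(deriv g 0)) • deriv α 0
      + (b * d * g 0 * κ₁ 0) • β 0 - (d * a * g 0) • α 0)
    (y : V)
    (hyα : ∀ t : ℝ, B y (α t) = 0) (hyβ : ∀ t : ℝ, B y (β t) = 0)
    (hyα' : ∀ t : ℝ, B y (deriv α t) = 0) :
    ∀ t : ℝ,
      B (y + α t + (d * B y y / (2 * g t)) • ρ₀)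
        (y + α t + (d * B y y / (2 * g t)) • ρ₀) = a := by
  have hgκ (t : ℝ) : HasDerivAt (fun s ↦ g s * κ₁ s) (deriv g t * κ₂ t) t :=
    hκ₂ t ▸ hasDerivAt_mul_of_eq_add_zpow_neg (hg t).hasDerivAt (hgpos t).ne' hκ₁
  exact stmt_8_general hBsymm ha hb hd (fun t ↦ (hgpos t).ne') hg hg' hgκ hfirstint hg'' hα hα' hβ
    hαeq hβeq ((hasDiagonalGram_vec3_iff hBsymm).2 ⟨⟨hαα, hββ, hα'α'⟩, hαβ, hαα', hβα'⟩) hρ₀ hyα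
    hyβ hyα'
end

section
/- Let n > 2 be an integer, let H ∈ ℝ satisfy −2√(n−1)/n < H < 1, and let C ∈ ℝ be arbitrary. Then there exists a twice continuously differentiable function g : ℝ → ℝ with g(t) > 0 and g′(t)² = C + g(t)² − (H·g(t) + g(t)^(1−n))² for all t ∈ ℝ, such that g attains a global minimum at some point and g is unbounded above (in particular g is nonconstant). -/
/-!
Differentiating `g′² = q(g)` gives the Newton equation `g″ = f(g)` with `2f = q′`, which, unlike the
first-order equation, is regular at the turning point `q(g) = 0`. The bounds on `H` ensure that `f`
is positive on `(0, ∞)` and that `q` has a zero `x₀` there. A particle released from rest at `x₀`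
follows a convex trajectory, so it stays in `[x₀, ∞)`, where `f` is smooth and grows at most
linearly; hence the motion exists for all time. Conservation of energy recovers `g′² = q(g)`.
-/

open Filter Manifold Set Topology
open scoped ContDiff

section GlobalFlow

variable {E : Type*} [NormedAddCommGroup E] [NormedSpace ℝ E] [FiniteDimensional ℝ E]
  {X : E → E} {B : ℝ}

theorem exists_isIntegralCurveOn_of_linear_growth (hX : ContDiff ℝ 1 X) (hB : 0 < B)
    (hXB : ∀ x, ‖X x‖ ≤ B * (1 + ‖x‖)) (x₀ : E) :
    ∃ γ : ℝ → E, γ 0 = x₀ ∧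
      IsIntegralCurveOn γ (fun _ ↦ X) (Ioo (-(1 / (2 * B))) (1 / (2 * B))) := by
  have : CompleteSpace E := FiniteDimensional.complete ℝ E
  have hε : 0 < 1 / (2 * B) := by positivity
  lift B to NNReal using hB.le
  obtain ⟨K, hK⟩ := hX.contDiffOn.exists_lipschitzOnWith one_ne_zero
    (convex_closedBall x₀ (1 + ‖x₀‖)) (isCompact_closedBall _ _)
  have hbound : ∀ x ∈ Metric.closedBall x₀ (1 + ‖x₀‖), ‖X x‖ ≤ 2 * B * (1 + ‖x₀‖) := by
    intro x hx
    have hx_norm : ‖x‖ ≤ ‖x₀‖ + (1 + ‖x₀‖) :=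
      (norm_le_norm_add_norm_sub' x x₀).trans (by gcongr; exact mem_closedBall_iff_norm.1 hx)
    calc ‖X x‖ ≤ B * (1 + ‖x‖) := hXB x
      _ ≤ B * (1 + (‖x₀‖ + (1 + ‖x₀‖))) := by gcongr
      _ = 2 * B * (1 + ‖x₀‖) := by ring
  have hPL : IsPicardLindelof (fun _ ↦ X) (tmin := -(1 / (2 * B))) (tmax := 1 / (2 * B))
      ⟨0, by constructor <;> linarith⟩ x₀ (1 + ‖x₀‖₊) 0 (2 * B * (1 + ‖x₀‖₊)) K := by
    refine .of_time_independent (by simpa using hbound) (by simpa using hK) ?_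
    simp only [NNReal.coe_mul, NNReal.coe_add, NNReal.coe_one, NNReal.coe_ofNat, coe_nnnorm,
      NNReal.coe_zero, sub_zero, zero_sub, neg_neg, max_self]
    apply le_of_eq
    field_simp
  obtain ⟨γ, hγ₀, hγ⟩ := hPL.exists_eq_forall_mem_Icc_hasDerivWithinAt₀
  exact ⟨γ, hγ₀, fun t ht ↦ (hγ t (Ioo_subset_Icc_self ht)).mono Ioo_subset_Icc_self⟩

theorem exists_isIntegralCurve_of_linear_growth (hX : ContDiff ℝ 1 X) (hB : 0 < B)
    (hXB : ∀ x, ‖X x‖ ≤ B * (1 + ‖x‖)) (x₀ : E) :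
    ∃ γ : ℝ → E, γ 0 = x₀ ∧ IsIntegralCurve γ (fun _ ↦ X) := by
  have : CompleteSpace E := FiniteDimensional.complete ℝ E
  have hlocal : ∀ x, ∃ γ : ℝ → E, γ 0 = x ∧
      IsMIntegralCurveOn (I := 𝓘(ℝ, E)) γ X (Ioo (-(1 / (2 * B))) (1 / (2 * B))) := by
    intro x
    obtain ⟨γ, hγ₀, hγ⟩ := exists_isIntegralCurveOn_of_linear_growth hX hB hXB x
    exact ⟨γ, hγ₀, fun t ht ↦ (hγ t ht).hasFDerivWithinAt.hasMFDerivWithinAt⟩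
  obtain ⟨γ, hγ₀, hγ⟩ := exists_isMIntegralCurve_of_isMIntegralCurveOn (I := 𝓘(ℝ, E))
    (contMDiff_vectorSpace_iff_contDiff.2 hX) (by positivity : 0 < 1 / (2 * B)) hlocal x₀
  exact ⟨γ, hγ₀, fun t ↦ hasDerivAt_iff_hasFDerivAt.2 (hγ t).hasFDerivAt⟩

end GlobalFlow

section Convex

variable {f : ℝ → ℝ} {f' x : ℝ}

theorem tangent_le_of_convexOn_univ (hf : ConvexOn ℝ univ f) (hf' : HasDerivAt f f' x) (y : ℝ) :
    f x + f' * (y - x) ≤ f y := by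
  rcases lt_trichotomy x y with hxy | rfl | hyx
  · have hslope := hf.le_slope_of_hasDerivAt (mem_univ x) (mem_univ y) hxy hf'
    rw [slope_def_field, le_div_iff₀ (sub_pos.2 hxy)] at hslope
    linarith
  · simp
  · have hslope := hf.slope_le_of_hasDerivAt (mem_univ y) (mem_univ x) hyx hf'
    rw [slope_def_field, div_le_iff₀ (sub_pos.2 hyx)] at hslope
    linarith

theorem tendsto_atTop_of_convexOn_univ (hf : ConvexOn ℝ univ f) (hf' : HasDerivAt f f' x)
    (hpos : 0 < f') : Tendsto f atTop atTop :=
  tendsto_atTop_mono (tangent_le_of_convexOn_univ hf hf') <|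
    tendsto_atTop_add_const_left _ _ <|
      (tendsto_atTop_add_const_right _ (-x) tendsto_id).const_mul_atTop hpos

end Convex

/-- `g` solves the second-order autonomous equation `g″ = F(g)` for all time. -/
structure IsNewtonMotion {E : Type*} [NormedAddCommGroup E] [NormedSpace ℝ E]
    (F : E → E) (g : ℝ → E) : Prop where
  differentiable : Differentiable ℝ g
  hasDerivAt_deriv : ∀ t, HasDerivAt (deriv g) (F (g t)) t

namespace IsNewtonMotion

section NormedSpace

variable {E : Type*} [NormedAddCommGroup E] [NormedSpace ℝ E] {F G : E → E} {g : ℝ → E}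

theorem congr (hg : IsNewtonMotion F g) (hFG : ∀ t, F (g t) = G (g t)) : IsNewtonMotion G g :=
  ⟨hg.differentiable, fun t ↦ hFG t ▸ hg.hasDerivAt_deriv t⟩

theorem contDiff_two (hg : IsNewtonMotion F g) {s : Set E} (hF : ContinuousOn F s)
    (hgs : ∀ t, g t ∈ s) : ContDiff ℝ 2 g := by
  have hderiv₂ : deriv (deriv g) = fun t ↦ F (g t) := funext fun t ↦ (hg.hasDerivAt_deriv t).deriv
  have hderiv : ContDiff ℝ 1 (deriv g) := by
    refine contDiff_one_iff_deriv.2 ⟨fun t ↦ (hg.hasDerivAt_deriv t).differentiableAt, ?_⟩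
    exact hderiv₂ ▸ hF.comp_continuous hg.differentiable.continuous hgs
  rw [← one_add_one_eq_two, contDiff_succ_iff_deriv]
  exact ⟨hg.differentiable, by simp, hderiv⟩

end NormedSpace

variable {F V g : ℝ → ℝ}

theorem convexOn (hg : IsNewtonMotion F g) (hF : ∀ t, 0 ≤ F (g t)) : ConvexOn ℝ univ g :=
  (monotone_of_hasDerivAt_nonneg hg.hasDerivAt_deriv hF).convexOn_univ_of_deriv hg.differentiable

theorem le_of_deriv_eq_zero (hg : IsNewtonMotion F g) (hF : ∀ t, 0 ≤ F (g t)) {s : ℝ}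
    (hs : deriv g s = 0) (t : ℝ) : g s ≤ g t := by
  simpa [hs] using
    tangent_le_of_convexOn_univ (hg.convexOn hF) (hg.differentiable s).hasDerivAt t

theorem tendsto_atTop (hg : IsNewtonMotion F g) (hF : ∀ t, 0 < F (g t)) {s : ℝ}
    (hs : 0 ≤ deriv g s) : Tendsto g atTop atTop := by
  have hmono : StrictMono (deriv g) := strictMono_of_hasDerivAt_pos hg.hasDerivAt_deriv hF
  exact tendsto_atTop_of_convexOn_univ (hg.convexOn fun t ↦ (hF t).le)
    (hg.differentiable (s + 1)).hasDerivAt (hs.trans_lt (hmono (lt_add_one s)))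

theorem deriv_sq_sub_eq (hg : IsNewtonMotion F g)
    (hV : ∀ t, HasDerivAt V (2 * F (g t)) (g t)) (s t : ℝ) :
    deriv g s ^ 2 - V (g s) = deriv g t ^ 2 - V (g t) := by
  have hderiv : ∀ t, HasDerivAt (fun t ↦ deriv g t ^ 2 - V (g t)) 0 t := fun t ↦
    (((hg.hasDerivAt_deriv t).pow 2).sub
      ((hV t).comp t (hg.differentiable t).hasDerivAt)).congr_deriv (by ring)
  exact is_const_of_deriv_eq_zero (fun t ↦ (hderiv t).differentiableAt)
    (fun t ↦ (hderiv t).deriv) s t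

end IsNewtonMotion

theorem exists_isNewtonMotion {E : Type*} [NormedAddCommGroup E] [NormedSpace ℝ E]
    [FiniteDimensional ℝ E] {F : E → E} {B : ℝ} (hF : ContDiff ℝ 1 F)
    (hFB : ∀ x, ‖F x‖ ≤ B * (1 + ‖x‖)) (x₀ v₀ : E) :
    ∃ g, IsNewtonMotion F g ∧ g 0 = x₀ ∧ deriv g 0 = v₀ := by
  have hgrowth : ∀ z : E × E, ‖(z.2, F z.1)‖ ≤ max 1 B * (1 + ‖z‖) := by
    intro z
    refine max_le ?_ ?_
    · calc ‖z.2‖ ≤ 1 * (1 + ‖z‖) := by linarith [norm_snd_le z]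
        _ ≤ max 1 B * (1 + ‖z‖) := by gcongr; exact le_max_left 1 B
    · calc ‖F z.1‖ ≤ B * (1 + ‖z.1‖) := hFB z.1
        _ ≤ max 1 B * (1 + ‖z‖) := by gcongr; exacts [le_max_right 1 B, norm_fst_le z]
  obtain ⟨γ, hγ₀, hγ⟩ := exists_isIntegralCurve_of_linear_growth
    (contDiff_snd.prodMk (hF.comp contDiff_fst)) (by positivity) hgrowth (x₀, v₀)
  have hpos : ∀ t, HasDerivAt (fun t ↦ (γ t).1) (γ t).2 t := fun t ↦ (hγ t).fst
  have hvel : ∀ t, HasDerivAt (fun t ↦ (γ t).2) (F (γ t).1) t := fun t ↦ (hγ t).snd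
  have hderiv : deriv (fun t ↦ (γ t).1) = fun t ↦ (γ t).2 := funext fun t ↦ (hpos t).deriv
  exact ⟨fun t ↦ (γ t).1, ⟨fun t ↦ (hpos t).differentiableAt, hderiv ▸ hvel⟩,
    congrArg Prod.fst hγ₀, by simp [hderiv, hγ₀]⟩

theorem exists_contDiff_Ici_retraction {a b : ℝ} (hab : a < b) :
    ∃ ψ : ℝ → ℝ, ContDiff ℝ ∞ ψ ∧ (∀ x, a ≤ ψ x) ∧ (∀ x, b ≤ x → ψ x = x) ∧
      ∀ x, |ψ x - a| ≤ |x - a| := by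
  have hba : 0 < b - a := sub_pos.2 hab
  let σ : ℝ → ℝ := fun x ↦ Real.smoothTransition ((x - a) / (b - a))
  have hσ₀ : ∀ x, 0 ≤ σ x := fun x ↦ Real.smoothTransition.nonneg _
  have hσ : ContDiff ℝ ∞ σ := Real.smoothTransition.contDiff.comp (by fun_prop)
  refine ⟨fun x ↦ a + σ x * (x - a), by fun_prop, fun x ↦ ?_, fun x hx ↦ ?_, fun x ↦ ?_⟩
  · rcases le_total x a with hx | hx
    · have : σ x = 0 := Real.smoothTransition.zero_of_nonpos
        (div_nonpos_of_nonpos_of_nonneg (sub_nonpos.2 hx) hba.le)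
      simp [this]
    · exact le_add_of_nonneg_right (mul_nonneg (hσ₀ x) (sub_nonneg.2 hx))
  · have : σ x = 1 := Real.smoothTransition.one_of_one_le ((one_le_div hba).2 (by gcongr))
    simp [this]
  · rw [add_sub_cancel_left, abs_mul, abs_of_nonneg (hσ₀ x)]
    exact mul_le_of_le_one_left (abs_nonneg _) (Real.smoothTransition.le_one _)

theorem exists_isNewtonMotion_of_nonneg {f : ℝ → ℝ} {a x₀ B : ℝ} (hax₀ : a < x₀)
    (hf : ContDiffOn ℝ 1 f (Ici a)) (hf₀ : ∀ x ∈ Ici a, 0 ≤ f x)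
    (hfB : ∀ x ∈ Ici a, f x ≤ B * (1 + |x|)) :
    ∃ g, IsNewtonMotion f g ∧ g 0 = x₀ ∧ deriv g 0 = 0 ∧ ∀ t, x₀ ≤ g t := by
  obtain ⟨ψ, hψ, hψa, hψ_eq, hψ_abs⟩ := exists_contDiff_Ici_retraction hax₀
  have hB : 0 ≤ B := nonneg_of_mul_nonneg_left
    ((hf₀ a self_mem_Ici).trans (hfB a self_mem_Ici)) (by positivity)
  have hgrowth : ∀ x, ‖f (ψ x)‖ ≤ B * (1 + 2 * |a|) * (1 + ‖x‖) := by
    intro x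
    have hψx : |ψ x| ≤ 2 * |a| + |x| := by
      linarith [hψ_abs x, abs_sub x a, abs_sub_abs_le_abs_sub (ψ x) a]
    calc ‖f (ψ x)‖ = f (ψ x) := Real.norm_of_nonneg (hf₀ _ (hψa x))
      _ ≤ B * (1 + |ψ x|) := hfB _ (hψa x)
      _ ≤ B * (1 + (2 * |a| + |x|)) := by gcongr
      _ ≤ B * ((1 + 2 * |a|) * (1 + |x|)) := by
        gcongr
        nlinarith [mul_nonneg (abs_nonneg a) (abs_nonneg x)]
      _ = B * (1 + 2 * |a|) * (1 + ‖x‖) := by rw [mul_assoc, Real.norm_eq_abs]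
  obtain ⟨g, hg, hg₀, hg₀'⟩ := exists_isNewtonMotion
    (hf.comp_contDiff (hψ.of_le (by simp)) hψa) hgrowth x₀ 0
  have hmin : ∀ t, x₀ ≤ g t := hg₀ ▸ hg.le_of_deriv_eq_zero (fun t ↦ hf₀ _ (hψa _)) hg₀'
  exact ⟨g, hg.congr fun t ↦ congrArg f (hψ_eq _ (hmin t)), hg₀, hg₀', hmin⟩

section Profile

/-- The right-hand side `q` of the first-order equation `g′² = q(g)`, for a real exponent `n`. -/
noncomputable def speedSq (n H C v : ℝ) : ℝ :=
  C + v ^ 2 - (H * v + v ^ (1 - n)) ^ 2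

/-- Half the derivative of `speedSq n H C` on `(0, ∞)`, that is, the force in the second-order form
of the equation, written as `v` times a quadratic polynomial in `W = v ^ (-n)`. -/
noncomputable def force (n H v : ℝ) : ℝ :=
  v * (1 - (H + v ^ (-n)) * (H - (n - 1) * v ^ (-n)))

variable {n H C v : ℝ}

theorem rpow_one_sub_eq_mul (hv : 0 < v) : v ^ (1 - n) = v * v ^ (-n) := by
  rw [sub_eq_add_neg, Real.rpow_add hv, Real.rpow_one]

theorem hasDerivAt_speedSq (hv : 0 < v) :
    HasDerivAt (speedSq n H C) (2 * force n H v) v := by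
  have hpow : HasDerivAt (fun x : ℝ ↦ x ^ (1 - n)) ((1 - n) * v ^ (-n)) v := by
    simpa using Real.hasDerivAt_rpow_const (p := 1 - n) (Or.inl hv.ne')
  refine ((((hasDerivAt_id v).pow 2).const_add C).sub
    ((((hasDerivAt_id v).const_mul H).add hpow).pow 2)).congr_deriv ?_
  simp only [force, id, Pi.add_apply, rpow_one_sub_eq_mul hv]
  ring

theorem tendsto_speedSq_atTop (hn : 0 < n) (hH : |H| < 1) :
    Tendsto (speedSq n H C) atTop atTop := by
  have hfactor : Tendsto (fun v : ℝ ↦ 1 - (H + v ^ (-n)) ^ 2) atTop (𝓝 (1 - H ^ 2)) := by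
    simpa using (((tendsto_rpow_neg_atTop hn).const_add H).pow 2).const_sub 1
  refine (tendsto_atTop_add_const_left _ C <| (tendsto_pow_atTop two_ne_zero).atTop_mul_pos
    (sub_pos.2 ((sq_lt_one_iff_abs_lt_one H).2 hH)) hfactor).congr' ?_
  filter_upwards [eventually_gt_atTop 0] with v hv
  rw [speedSq, rpow_one_sub_eq_mul hv]
  ring

theorem tendsto_speedSq_nhdsGT_zero (hn : 1 < n) :
    Tendsto (speedSq n H C) (𝓝[>] 0) atBot := by
  have hpoly : ∀ p : ℝ → ℝ, Continuous p → Tendsto p (𝓝[>] 0) (𝓝 (p 0)) := fun p hp ↦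
    (hp.tendsto 0).mono_left nhdsWithin_le_nhds
  have hsum : Tendsto (fun v : ℝ ↦ H * v + v ^ (1 - n)) (𝓝[>] 0) atTop :=
    (hpoly (H * ·) (by fun_prop)).add_atTop (tendsto_rpow_neg_nhdsGT_zero (by linarith))
  exact (hpoly (C + · ^ 2) (by fun_prop)).add_atBot
    (tendsto_neg_atTop_atBot.comp ((tendsto_pow_atTop two_ne_zero).comp hsum))

theorem exists_speedSq_eq_zero (hn : 1 < n) (hH : |H| < 1) (C : ℝ) :
    ∃ v, 0 < v ∧ speedSq n H C v = 0 := by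
  have hcont : ContinuousOn (speedSq n H C) (Ioi 0) :=
    HasDerivAt.continuousOn fun v hv ↦ hasDerivAt_speedSq hv
  exact isPreconnected_Ioi.intermediate_value_Iii (l₁ := 𝓝[>] 0) inf_le_right
    (le_principal_iff.2 (Ioi_mem_atTop 0)) hcont (tendsto_speedSq_nhdsGT_zero hn)
    (tendsto_speedSq_atTop (by linarith) hH) (mem_univ 0)

theorem abs_lt_one_of_lt (hn : 1 ≤ n) (hH₁ : -(2 * √(n - 1) / n) < H) (hH₂ : H < 1) :
    |H| < 1 := by
  have hsq : √(n - 1) ^ 2 = n - 1 := Real.sq_sqrt (by linarith)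
  have hAMGM : 2 * √(n - 1) / n ≤ 1 := by
    rw [div_le_one (by linarith)]
    linarith [sq_nonneg (√(n - 1) - 1)]
  exact abs_lt.2 ⟨by linarith, hH₂⟩

theorem sq_mul_sq_lt_of_neg (hn : 1 ≤ n) (hH₁ : -(2 * √(n - 1) / n) < H) (hH : H < 0) :
    n ^ 2 * H ^ 2 < 4 * (n - 1) := by
  have hlt : n * -H < 2 * √(n - 1) := by
    rw [← lt_div_iff₀' (by linarith)]
    linarith
  calc n ^ 2 * H ^ 2 = (n * -H) ^ 2 := by ring
    _ < (2 * √(n - 1)) ^ 2 := by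
      gcongr
      exact mul_nonneg (by linarith) (by linarith)
    _ = 4 * (n - 1) := by rw [mul_pow, Real.sq_sqrt (by linarith)]; ring

theorem force_pos (hn : 2 ≤ n) (hH₁ : -(2 * √(n - 1) / n) < H) (hH₂ : H < 1) (hv : 0 < v) :
    0 < force n H v := by
  refine mul_pos hv ?_
  have hW : 0 < v ^ (-n) := Real.rpow_pos_of_pos hv _
  set W := v ^ (-n)
  rcases le_or_gt 0 H with hH | hH
  · have hmid : 0 ≤ (n - 2) * (H * W) := mul_nonneg (by linarith) (by positivity)
    have hlead : 0 < (n - 1) * W ^ 2 := mul_pos (by linarith) (by positivity)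
    have hconst : H ^ 2 < 1 := by nlinarith
    linarith
  · refine pos_of_mul_pos_right (a := 4 * (n - 1)) ?_ (by linarith)
    calc 0 < (2 * (n - 1) * W + (n - 2) * H) ^ 2 + (4 * (n - 1) - n ^ 2 * H ^ 2) :=
        add_pos_of_nonneg_of_pos (sq_nonneg _)
          (sub_pos.2 (sq_mul_sq_lt_of_neg (by linarith) hH₁ hH))
      _ = 4 * (n - 1) * (1 - (H + W) * (H - (n - 1) * W)) := by ring

theorem contDiffOn_force {k : WithTop ℕ∞} : ContDiffOn ℝ k (force n H) (Ioi 0) := by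
  have hpow : ContDiffOn ℝ k (fun v : ℝ ↦ v ^ (-n)) (Ioi 0) :=
    contDiffOn_id.rpow_const_of_ne fun v hv ↦ (mem_Ioi.1 hv).ne'
  unfold force
  fun_prop

theorem exists_force_le (hn : 1 ≤ n) (H : ℝ) {a : ℝ} (ha : 0 < a) :
    ∃ B, ∀ v ∈ Ici a, force n H v ≤ B * (1 + |v|) := by
  have hn' : 0 ≤ n - 1 := sub_nonneg.2 hn
  refine ⟨1 + (|H| + a ^ (-n)) * (|H| + (n - 1) * a ^ (-n)), fun v hv ↦ ?_⟩
  have hv₀ : 0 < v := ha.trans_le hv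
  have hW : |v ^ (-n)| ≤ a ^ (-n) := by
    rw [abs_of_pos (by positivity)]
    exact Real.rpow_le_rpow_of_nonpos ha hv (by linarith)
  calc force n H v ≤ |force n H v| := le_abs_self _
    _ = |1 - (H + v ^ (-n)) * (H - (n - 1) * v ^ (-n))| * |v| := by
      rw [force, abs_mul, mul_comm]
    _ ≤ (1 + (|H| + |v ^ (-n)|) * (|H| + (n - 1) * |v ^ (-n)|)) * |v| := by
      gcongr
      refine (abs_sub _ _).trans ?_
      rw [abs_one, abs_mul]
      gcongr
      · exact abs_add_le _ _
      · exact (abs_sub _ _).trans_eq (by rw [abs_mul, abs_of_nonneg hn'])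
    _ ≤ (1 + (|H| + a ^ (-n)) * (|H| + (n - 1) * a ^ (-n))) * (1 + |v|) := by
      gcongr
      linarith

end Profile

theorem stmt_15_general (n : ℝ) (hn : 2 ≤ n) (H : ℝ) (hH₁ : -(2 * √(n - 1) / n) < H)
    (hH₂ : H < 1) (C : ℝ) :
    ∃ g : ℝ → ℝ, ContDiff ℝ 2 g ∧ (∀ t, 0 < g t) ∧
      (∀ t : ℝ, deriv g t ^ 2 = C + g t ^ 2 - (H * g t + g t ^ (1 - n)) ^ 2) ∧
      (∃ t₀ : ℝ, ∀ t : ℝ, g t₀ ≤ g t) ∧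
      (∀ M : ℝ, ∃ t : ℝ, M < g t) := by
  have hn₁ : 1 < n := by linarith
  obtain ⟨x₀, hx₀, hrest⟩ :=
    exists_speedSq_eq_zero hn₁ (abs_lt_one_of_lt hn₁.le hH₁ hH₂) C
  have hforce : ∀ x, 0 < x → 0 < force n H x := fun x ↦ force_pos hn hH₁ hH₂
  have hIci : Ici (x₀ / 2) ⊆ Ioi 0 := Ici_subset_Ioi.2 (half_pos hx₀)
  obtain ⟨B, hB⟩ := exists_force_le hn₁.le H (half_pos hx₀)
  obtain ⟨g, hg, hg₀, hg₀', hmin⟩ := exists_isNewtonMotion_of_nonneg (half_lt_self hx₀)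
    (contDiffOn_force.mono hIci) (fun x hx ↦ (hforce x (hIci hx)).le) hB
  have hpos : ∀ t, 0 < g t := fun t ↦ hx₀.trans_le (hmin t)
  refine ⟨g, hg.contDiff_two (contDiffOn_force (k := 0)).continuousOn hpos, hpos, fun t ↦ ?_,
    ⟨0, hg₀ ▸ hmin⟩, fun M ↦ ?_⟩
  · have henergy := hg.deriv_sq_sub_eq (fun t ↦ hasDerivAt_speedSq (C := C) (hpos t)) t 0
    rw [hg₀, hg₀', hrest, zero_pow two_ne_zero, sub_zero, sub_eq_zero] at henergy
    exact henergy
  · have htop : Tendsto g atTop atTop := hg.tendsto_atTop (fun t ↦ hforce _ (hpos t)) hg₀'.ge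
    exact (htop.eventually_gt_atTop M).exists

/-- Theorem 10.1 (hyperbolic case, a·d = −1, b·d = 1): for
`−2√(n−1)/n < H < 1` and any `C`, there exists a positive `C²` global solution of
`g′² = C + g² − (H·g + g^(1−n))²` which attains a global minimum and is
unbounded above ('type 3' solution). -/
theorem stmt_15 (n : ℕ) (hn : 2 < n) (H : ℝ)
    (hH₁ : -(2 * Real.sqrt ((n : ℝ) - 1) / (n : ℝ)) < H) (hH₂ : H < 1)
    (C : ℝ) :
    ∃ g : ℝ → ℝ, ContDiff ℝ 2 g ∧ (∀ t, 0 < g t) ∧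
      (∀ t : ℝ, (deriv g t) ^ 2 =
        C + (g t) ^ 2 - (H * g t + g t ^ (1 - (n : ℤ))) ^ 2) ∧
      (∃ t₀ : ℝ, ∀ t : ℝ, g t₀ ≤ g t) ∧
      (∀ M : ℝ, ∃ t : ℝ, M < g t) := by
  simpa only [← Real.rpow_intCast, Int.cast_sub, Int.cast_one, Int.cast_natCast] using
    stmt_15_general n (by exact_mod_cast hn.le) H hH₁ hH₂ C
end
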